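/- arXiv:quant-ph/0605077 — 6 statements merged into one kernel-verified Lean document; each statement's English description precedes it below -/
import Mathlib

section
/- For every integer M ≥ 2 and all real numbers Δ₁, Δ₂ > 0 with Δ₁ + Δ₂ = 1/M, one has sin²(MπΔ₁)/(M²·sin²(πΔ₁)) + sin²(MπΔ₂)/(M²·sin²(πΔ₂)) ≥ 8/π². -/
/-!
Since `sin (πΔ) ≤ πΔ`, each denominator is at most `(MπΔᵢ)²`, so the dependence on `M`
disappears. Writing `MΔ₁ = (1 - s)/2` and `MΔ₂ = (1 + s)/2` with `|s| < 1`, both numerators equal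
`cos² (πs/2)`, and the sum is at least `(8/π²) · cos² (πs/2) (1 + s²) / (1 - s²)²`. What remains is
the inequality `(1 - s²)² ≤ cos² (πs/2) (1 + s²)` of `sq_one_sub_sq_le`. It is an equality
at `s = 0` and `s = ±1`, so it is proved from polynomial lower bounds for the cosine expanded
around `s = 0` when `|s| ≤ 3/5`, and for the sine expanded around `|s| = 1` otherwise.
-/

open Real

/-- A sharpening of Redheffer's bound `cos (πs/2) ≥ (1 - s²)/(1 + s²)`. -/
lemma sq_one_sub_sq_le_of_nonneg (s : ℝ) (h0 : 0 ≤ s) (h1 : s ≤ 1) :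
    (1 - s ^ 2) ^ 2 ≤ Real.cos (π * s / 2) ^ 2 * (1 + s ^ 2) := by
  have hp1 := Real.pi_gt_d2
  have hp2 : π < 3.142 := lt_trans Real.pi_lt_d4 (by norm_num)
  rcases le_total s (3 / 5) with hs | hs
  · have hmono : Real.cos (1.571 * s) ≤ Real.cos (π * s / 2) :=
      Real.cos_le_cos_of_nonneg_of_le_pi (by positivity) (by nlinarith) (by nlinarith)
    -- Doubling the angle turns `cos x ≥ 1 - x² / 2` into a bound with the quartic term needed here.
    have hhalf := Real.one_sub_sq_div_two_le_cos (x := 1.571 * s / 2)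
    have hdouble : Real.cos (1.571 * s) = 2 * Real.cos (1.571 * s / 2) ^ 2 - 1 := by
      rw [← Real.cos_two_mul]; ring_nf
    obtain ⟨y, hy⟩ : ∃ y, y = s ^ 2 := ⟨_, rfl⟩
    have hy0 : 0 ≤ y := by rw [hy]; positivity
    have hy1 : y ≤ 0.36 := by rw [hy]; nlinarith
    have hq : 1 - 1.235 * y + 0.19 * y ^ 2 ≤ Real.cos (π * s / 2) := by
      have h3 : 1 - 0.3086 * y ≤ Real.cos (1.571 * s / 2) := by
        rw [hy]; nlinarith [sq_nonneg s]
      have h4 : (1 - 0.3086 * y) ^ 2 ≤ Real.cos (1.571 * s / 2) ^ 2 :=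
        pow_le_pow_left₀ (by linarith) h3 2
      nlinarith [sq_nonneg y]
    have hsq : (1 - 1.235 * y + 0.19 * y ^ 2) ^ 2 ≤ Real.cos (π * s / 2) ^ 2 :=
      pow_le_pow_left₀ (by nlinarith) hq 2
    rw [← hy]
    have hpoly : (1 - y) ^ 2 ≤ (1 - 1.235 * y + 0.19 * y ^ 2) ^ 2 * (1 + y) := by
      have : 0 ≤ 0.53 - 1.564775 * y + 1.435925 * y ^ 2 - 0.4332 * y ^ 3 + 0.0361 * y ^ 4 := by
        nlinarith [mul_nonneg hy0 (sub_nonneg.2 hy1), sq_nonneg (y - 0.36),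
          mul_nonneg (sq_nonneg y) (sub_nonneg.2 hy1), sq_nonneg (y ^ 2)]
      nlinarith [mul_nonneg hy0 this]
    exact hpoly.trans (mul_le_mul_of_nonneg_right hsq (by linarith))
  · obtain ⟨u, hu⟩ : ∃ u, u = 1 - s := ⟨_, rfl⟩
    obtain rfl : s = 1 - u := by linarith
    have hu0 : 0 ≤ u := by linarith
    have hu1 : u ≤ 0.4 := by norm_num at hs ⊢; linarith
    have hcos : Real.cos (π * (1 - u) / 2) = Real.sin (π * u / 2) := by
      rw [← Real.cos_pi_div_two_sub]; ring_nf
    have hmono : Real.sin (1.57 * u) ≤ Real.sin (π * u / 2) :=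
      Real.sin_le_sin_of_le_of_le_pi_div_two (by nlinarith) (by nlinarith) (by nlinarith)
    have hcube : u * (1.57 - 0.968 * u ^ 2) ≤ Real.sin (1.57 * u) := by
      rcases hu0.eq_or_lt with h | h
      · simp [← h]
      · have := Real.sin_gt_sub_cube (x := 1.57 * u) (by positivity)
        nlinarith [pow_pos h 3]
    have hsq : (u * (1.57 - 0.968 * u ^ 2)) ^ 2 ≤ Real.cos (π * (1 - u) / 2) ^ 2 := by
      rw [hcos]
      exact pow_le_pow_left₀ (mul_nonneg hu0 (by nlinarith)) (hcube.trans hmono) 2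
    have hpoly : (2 - u) ^ 2 ≤ (1.57 - 0.968 * u ^ 2) ^ 2 * (1 + (1 - u) ^ 2) := by
      have : 2.4649 - 3.04 * u ^ 2 ≤ (1.57 - 0.968 * u ^ 2) ^ 2 := by
        nlinarith [sq_nonneg (u ^ 2)]
      have h2 : (2 - u) ^ 2 ≤ (2.4649 - 3.04 * u ^ 2) * (1 + (1 - u) ^ 2) := by
        nlinarith [mul_nonneg hu0 (sub_nonneg.2 hu1), mul_nonneg (sq_nonneg u) (sub_nonneg.2 hu1),
          sq_nonneg (u - 0.4), mul_nonneg hu0 (sq_nonneg (u - 0.4)), sq_nonneg (u ^ 2)]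
      exact h2.trans (mul_le_mul_of_nonneg_right this (by positivity))
    calc (1 - (1 - u) ^ 2) ^ 2 = u ^ 2 * (2 - u) ^ 2 := by ring
      _ ≤ u ^ 2 * ((1.57 - 0.968 * u ^ 2) ^ 2 * (1 + (1 - u) ^ 2)) :=
        mul_le_mul_of_nonneg_left hpoly (sq_nonneg u)
      _ = (u * (1.57 - 0.968 * u ^ 2)) ^ 2 * (1 + (1 - u) ^ 2) := by ring
      _ ≤ _ := mul_le_mul_of_nonneg_right hsq (by positivity)

lemma sq_one_sub_sq_le (s : ℝ) (h : |s| ≤ 1) :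
    (1 - s ^ 2) ^ 2 ≤ Real.cos (π * s / 2) ^ 2 * (1 + s ^ 2) := by
  have := sq_one_sub_sq_le_of_nonneg |s| (abs_nonneg s) h
  rw [sq_abs, ← Real.cos_abs] at this
  rw [← Real.cos_abs]
  simpa [abs_mul, abs_div] using this

/-- Replacing `sin (πΔ)` by `πΔ` in the denominator only decreases the quotient. The bound `Δ < 1`
keeps `sin (πΔ)` nonzero, so that the quotient on the right is a genuine one. -/
lemma div_sq_le_div_sin_sq (c : ℝ) {m Δ : ℝ} (hm : 0 < m) (h0 : 0 < Δ) (h1 : Δ < 1) :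
    c ^ 2 / (π * (m * Δ)) ^ 2 ≤ c ^ 2 / (m ^ 2 * Real.sin (π * Δ) ^ 2) := by
  have hpi := Real.pi_pos
  have hpos : 0 < Real.sin (π * Δ) :=
    Real.sin_pos_of_pos_of_lt_pi (by positivity) (by nlinarith)
  have hle : Real.sin (π * Δ) ≤ π * Δ := Real.sin_le (by positivity)
  apply div_le_div_of_nonneg_left (sq_nonneg c) (by positivity)
  calc m ^ 2 * Real.sin (π * Δ) ^ 2 ≤ m ^ 2 * (π * Δ) ^ 2 := by gcongr
    _ = (π * (m * Δ)) ^ 2 := by ring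

/-- For `M ≥ 2` and `Δ₁, Δ₂ > 0` with `Δ₁ + Δ₂ = 1/M`,
`sin²(MπΔ₁)/(M²sin²(πΔ₁)) + sin²(MπΔ₂)/(M²sin²(πΔ₂)) ≥ 8/π²`. -/
theorem phase_estimation_success_prob (M : ℕ) (hM : 2 ≤ M) (Δ₁ Δ₂ : ℝ)
    (h₁ : 0 < Δ₁) (h₂ : 0 < Δ₂) (hsum : Δ₁ + Δ₂ = 1 / M) :
    Real.sin ((M : ℝ) * π * Δ₁) ^ 2 / ((M : ℝ) ^ 2 * Real.sin (π * Δ₁) ^ 2)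
      + Real.sin ((M : ℝ) * π * Δ₂) ^ 2 / ((M : ℝ) ^ 2 * Real.sin (π * Δ₂) ^ 2)
      ≥ 8 / π ^ 2 := by
  have hm2 : (2 : ℝ) ≤ M := by exact_mod_cast hM
  have hm : (0 : ℝ) < M := by linarith
  have hpi := Real.pi_pos
  have hsum' : (M : ℝ) * Δ₁ + M * Δ₂ = 1 := by
    rw [← mul_add, hsum]; field_simp
  have hp1 : 0 < (M : ℝ) * Δ₁ := by positivity
  have hp2 : 0 < (M : ℝ) * Δ₂ := by positivity
  obtain ⟨s, hs⟩ : ∃ s, s = 1 - 2 * ((M : ℝ) * Δ₁) := ⟨_, rfl⟩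
  have e1 : (M : ℝ) * Δ₁ = (1 - s) / 2 := by linarith
  have e2 : (M : ℝ) * Δ₂ = (1 + s) / 2 := by linarith
  have s1 : Real.sin ((M : ℝ) * π * Δ₁) = Real.cos (π * s / 2) := by
    rw [← Real.sin_pi_div_two_sub, mul_right_comm, e1]; ring_nf
  have s2 : Real.sin ((M : ℝ) * π * Δ₂) = Real.cos (π * s / 2) := by
    rw [← Real.cos_neg, ← Real.sin_pi_div_two_sub, mul_right_comm, e2]; ring_nf
  have b1 := div_sq_le_div_sin_sq (Real.cos (π * s / 2)) hm h₁ (by nlinarith)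
  have b2 := div_sq_le_div_sin_sq (Real.cos (π * s / 2)) hm h₂ (by nlinarith)
  have hs1 : 0 < 1 - s := by linarith
  have hs2 : 0 < 1 + s := by linarith
  have key := sq_one_sub_sq_le s (abs_le.2 ⟨by linarith, by linarith⟩)
  have hd : 0 < (1 - s ^ 2) ^ 2 := by
    have : 0 < 1 - s ^ 2 := by nlinarith
    positivity
  rw [e1] at b1
  rw [e2] at b2
  rw [s1, s2]
  refine le_trans ?_ (add_le_add b1 b2)
  have heq : Real.cos (π * s / 2) ^ 2 / (π * ((1 - s) / 2)) ^ 2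
      + Real.cos (π * s / 2) ^ 2 / (π * ((1 + s) / 2)) ^ 2
      = 8 / π ^ 2 * (Real.cos (π * s / 2) ^ 2 * (1 + s ^ 2) / (1 - s ^ 2) ^ 2) := by
    rw [show 1 - s ^ 2 = (1 - s) * (1 + s) by ring]
    field_simp
    ring
  rw [heq]
  exact le_mul_of_one_le_right (by positivity) ((one_le_div hd).2 key)
end

section
/- Let θ, θ_x, τ be real numbers with 0 < θ ≤ θ_x ≤ π/2 and |θ_x − τ| ≤ θ_x/(3(π+1)) (in particular τ > 0). Set m* = ⌈(1/2)·(π/(2τ) − 1)⌉ and M₂ = ⌈(1/2)·(3π(π+1)/(2(3π+2)θ) + 1)⌉. Then m* ≤ M₂. -/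
open Real

/-- If `0 < θ ≤ θ_x ≤ π/2` and `|θ_x − τ| ≤ θ_x/(3(π+1))`, then
`m* = ⌈(1/2)(π/(2τ) − 1)⌉` is at most `M₂ = ⌈(1/2)(3π(π+1)/(2(3π+2)θ) + 1)⌉`. -/
theorem iterations_le_cap (θ θx τ : ℝ) (hθ0 : 0 < θ) (hθ : θ ≤ θx)
    (hθx : θx ≤ π / 2) (hτ : |θx - τ| ≤ θx / (3 * (π + 1))) :
    (⌈(1 / 2 : ℝ) * (π / (2 * τ) - 1)⌉ : ℤ)
      ≤ ⌈(1 / 2 : ℝ) * (3 * π * (π + 1) / (2 * (3 * π + 2) * θ) + 1)⌉ := by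
  have hπ : 0 < π := pi_pos
  -- The accuracy bound gives `τ ≥ θx (1 - 1 / (3 (π + 1))) = θx (3π + 2) / (3 (π + 1))`.
  have h1 : (θx - τ) * (3 * (π + 1)) ≤ θx :=
    (le_div_iff₀ (by positivity)).1 ((le_abs_self _).trans hτ)
  have h2 : (3 * π + 2) * θ ≤ 3 * (π + 1) * τ := by
    have : (3 * π + 2) * θ ≤ (3 * π + 2) * θx := by gcongr
    linarith
  have hτ0 : 0 < τ := by
    have h3 : 0 < 3 * (π + 1) * τ := lt_of_lt_of_le (by positivity) h2
    exact pos_of_mul_pos_right h3 (by positivity)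
  have h4 : π / (2 * τ) ≤ 3 * π * (π + 1) / (2 * (3 * π + 2) * θ) := by
    rw [div_le_div_iff₀ (by positivity) (by positivity)]
    have := mul_le_mul_of_nonneg_left h2 (by positivity : 0 ≤ 2 * π)
    linarith
  apply Int.ceil_le_ceil
  linarith
end

section
/- Let θ and τ be real numbers with 0 < θ ≤ π/2, 0 < τ ≤ π/2, and |θ − τ| ≤ θ/(3(π+1)). Let m = ⌈(1/2)·(π/(2τ) − 1)⌉ (a nonnegative integer) and θ* = π/(4m+2), so that (2m+1)θ* = π/2. Then: (i) θ* ≤ τ; (ii) the ratio r = sin(θ*)·sin(θ)/sin(τ) satisfies 0 < r ≤ 1; and (iii) setting θ' = arcsin(r), one has sin((2m+1)θ') ≥ √(1 − 1/9) = 2√2/3. -/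
/-!
Write `s = sin θ / sin τ`. Concavity of `sin` on `[0, π]` makes `s` at least as close to `1` as
`θ / τ` is, so the accuracy of `τ` gives `0.92 ≤ s ≤ 1.088`.

For `m ≥ 1` one has `θ* ≤ π/6`, where `sin` is nearly linear: from `sin θ' = s * sin θ*` and `x - x³/6 < sin x ≤ x`,
one gets `0.79 θ* ≤ θ' ≤ 1.21 θ*`. As `(2m+1) θ* = π/2`, the angle `(2m+1) θ'` differs from
`π/2` by at most `0.21 * π/2 < 0.33`, and `cos x ≥ 1 - x²/2` finishes. For `m = 0` the linear
estimate is too weak, but then `θ* = τ = π/2`, so `r = sin θ` with `θ` close to `π/2`.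
-/

open Real


/-- Concavity of `sin` on `[0, π]`, in the form `sin x / x` is antitone. -/
lemma mul_sin_le_mul_sin {x y : ℝ} (hx : 0 < x) (hxy : x ≤ y) (hy : y ≤ π) :
    x * sin y ≤ y * sin x := by
  have hy0 : 0 < y := hx.trans_le hxy
  have h := strictConcaveOn_sin_Icc.concaveOn.2 (x := 0) (y := y) ⟨le_rfl, pi_pos.le⟩
    ⟨hy0.le, hy⟩
    (by rw [sub_nonneg, div_le_one hy0]; exact hxy : 0 ≤ 1 - x / y)
    (by positivity : 0 ≤ x / y) (by ring)
  simp only [smul_eq_mul, mul_zero, sin_zero, zero_add] at h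
  rw [div_mul_cancel₀ _ hy0.ne', div_mul_eq_mul_div, div_le_iff₀ hy0] at h
  linarith

/-- The target bound holds for angles within `0.33` of `π/2`, since `1 - 0.33²/2 > 2√2/3`. -/
lemma sqrt_le_sin_of_near {y : ℝ} (h1 : π / 2 - y ≤ 0.33) (h2 : y - π / 2 ≤ 0.33) :
    √(1 - 1 / 9) ≤ sin y := by
  have h := one_sub_sq_div_two_le_cos (x := π / 2 - y)
  rw [cos_pi_div_two_sub] at h
  have h3 : √(1 - 1 / 9) ≤ 0.9455 := by
    rw [sqrt_le_left (by norm_num)]; norm_num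
  nlinarith

/-- The stability estimate for `arcsin` on `(0, π/6]`: perturbing `sin x` by a factor in
`[0.92, 1.088]` changes the angle by a factor in `[0.79, 1.21]`. -/
lemma arcsin_mem_of_ratio {x s : ℝ} (hx : 0 < x) (hx6 : x ≤ π / 6) (hs1 : 0.92 ≤ s)
    (hs2 : s ≤ 1.088) : 0.79 * x ≤ arcsin (s * sin x) ∧ arcsin (s * sin x) ≤ 1.21 * x := by
  have hpi := pi_lt_d2
  have hx' : x ≤ 0.525 := by linarith
  constructor
  · rw [le_arcsin_iff_sin_le' ⟨by linarith, by linarith⟩]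
    have h1 : sin (0.79 * x) ≤ 0.79 * x := sin_le (by linarith)
    have h2 := sin_gt_sub_cube hx
    have h3 : 0.93 * x ≤ sin x := by nlinarith [mul_pos hx hx]
    nlinarith
  · rw [arcsin_le_iff_le_sin' ⟨by linarith, by linarith⟩]
    have h1 : sin x ≤ x := sin_le hx.le
    have h0 : 0 ≤ sin x := sin_nonneg_of_nonneg_of_le_pi hx.le (by linarith)
    have h2 := sin_gt_sub_cube (show 0 < 1.21 * x by linarith)
    set z := 1.21 * x with hz
    have hz0 : 0 < z := by linarith
    have hz1 : z ≤ 0.64 := by linarith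
    have h4 : z ^ 2 ≤ 0.41 := by nlinarith
    have h5 : z ^ 3 ≤ 0.41 * z := by nlinarith
    nlinarith

theorem derandomized_amplification (θ τ : ℝ) (hθ0 : 0 < θ) (hθ : θ ≤ π / 2)
    (hτ0 : 0 < τ) (hτ : τ ≤ π / 2) (hest : |θ - τ| ≤ θ / (3 * (π + 1)))
    (m : ℤ) (hm : m = ⌈(1 / 2 : ℝ) * (π / (2 * τ) - 1)⌉)
    (θs : ℝ) (hθs : θs = π / (4 * (m : ℝ) + 2))
    (r : ℝ) (hr : r = Real.sin θs * Real.sin θ / Real.sin τ) :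
    0 ≤ m ∧ θs ≤ τ ∧ (0 < r ∧ r ≤ 1) ∧
      Real.sin ((2 * (m : ℝ) + 1) * Real.arcsin r) ≥ Real.sqrt (1 - 1 / 9) ∧
      Real.sqrt (1 - 1 / 9) = 2 * Real.sqrt 2 / 3 := by
  have hpi := pi_gt_d2
  have hpi' := pi_lt_d4
  have hm0 : 0 ≤ m := by
    rw [hm]
    apply Int.ceil_nonneg
    have : 1 ≤ π / (2 * τ) := by rw [le_div_iff₀ (by positivity)]; linarith
    linarith
  have hmR : (0 : ℝ) ≤ m := by exact_mod_cast hm0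
  have hceil : (1 / 2 : ℝ) * (π / (2 * τ) - 1) ≤ m := by rw [hm]; exact Int.le_ceil _
  have hsτ : θs ≤ τ := by
    have h1 : π / (2 * τ) ≤ 2 * m + 1 := by linarith
    rw [div_le_iff₀ (by positivity)] at h1
    rw [hθs, div_le_iff₀ (by positivity)]
    linarith
  have hs0 : 0 < θs := by rw [hθs]; positivity
  have hsinθ : 0 < sin θ := sin_pos_of_pos_of_lt_pi hθ0 (by linarith)
  have hsinτ : 0 < sin τ := sin_pos_of_pos_of_lt_pi hτ0 (by linarith)
  have hsins : 0 < sin θs := sin_pos_of_pos_of_lt_pi hs0 (by linarith)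
  have hr0 : 0 < r := by rw [hr]; positivity
  have hr1 : r ≤ 1 := by
    rw [hr, div_le_one hsinτ]
    have h1 : sin θs ≤ sin τ := sin_le_sin_of_le_of_le_pi_div_two (by linarith) hτ hsτ
    nlinarith [sin_le_one θ]
  -- `π > 3.14` gives `3 * (π + 1) ≥ 12.4 = 62 / 5`.
  have hest' : |θ - τ| ≤ θ * (5 / 62) := by
    refine hest.trans ?_
    rw [div_le_iff₀ (by positivity)]
    nlinarith
  obtain ⟨he1, he2⟩ := abs_le.1 hest'
  have hval : √(1 - 1 / 9) = 2 * √2 / 3 := by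
    rw [sqrt_eq_iff_mul_self_eq_of_pos (by positivity)]
    nlinarith [mul_self_sqrt (show (0 : ℝ) ≤ 2 by norm_num)]
  refine ⟨hm0, hsτ, ⟨hr0, hr1⟩, ?_, hval⟩
  rcases hm0.eq_or_lt with h | h
  · have hθs' : θs = π / 2 := by rw [hθs, ← h]; norm_num
    have hτ' : τ = π / 2 := le_antisymm hτ (hθs' ▸ hsτ)
    have hrθ : r = sin θ := by rw [hr, hθs', hτ']; simp
    rw [← h, hrθ]
    simp only [Int.cast_zero, mul_zero, zero_add, one_mul]
    rw [arcsin_sin (by linarith) hθ]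
    exact sqrt_le_sin_of_near (by linarith) (by linarith)
  · have hm1 : (1 : ℝ) ≤ m := by exact_mod_cast h
    have hs6 : θs ≤ π / 6 := by
      rw [hθs]; gcongr; linarith
    have hN : (2 * (m : ℝ) + 1) * θs = π / 2 := by
      rw [hθs]; field_simp; ring
    have hratio : 0.92 ≤ sin θ / sin τ ∧ sin θ / sin τ ≤ 1.088 := by
      rw [le_div_iff₀ hsinτ, div_le_iff₀ hsinτ]
      rcases le_total θ τ with hle | hle
      · have h1 := mul_sin_le_mul_sin hθ0 hle (by linarith)
        have h2 : sin θ ≤ sin τ := sin_le_sin_of_le_of_le_pi_div_two (by linarith) hτ hle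
        refine ⟨?_, by linarith⟩
        have h3 : 0.92 * τ ≤ θ := by linarith
        refine le_of_mul_le_mul_left ?_ hτ0
        nlinarith
      · have h1 := mul_sin_le_mul_sin hτ0 hle (by linarith)
        have h2 : sin τ ≤ sin θ := sin_le_sin_of_le_of_le_pi_div_two (by linarith) hθ hle
        refine ⟨by linarith, ?_⟩
        have h3 : θ ≤ 1.088 * τ := by linarith
        refine le_of_mul_le_mul_left ?_ hτ0
        nlinarith
    have hrs : r = sin θ / sin τ * sin θs := by rw [hr]; ring
    obtain ⟨ha, hb⟩ := arcsin_mem_of_ratio hs0 hs6 hratio.1 hratio.2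
    rw [← hrs] at ha hb
    have hN0 : (0 : ℝ) ≤ 2 * m + 1 := by linarith
    have ha' := mul_le_mul_of_nonneg_left ha hN0
    have hb' := mul_le_mul_of_nonneg_left hb hN0
    exact sqrt_le_sin_of_near (by linarith) (by linarith)
end

section
/- Let N ≥ 1 be an integer and p a real number with 0 ≤ p ≤ 1, and set θ_p = arcsin(√p). Then: (i) if p ≥ 15/(16N), then θ_p − π/(11√N) > 0.68/√N; and (ii) if p ≤ 1/(16N), then θ_p + π/(11√N) < 0.68/√N. -/
open Real

/-!
On `[0, 1]` one has `x ≤ arcsin x ≤ π x / 2`. With `x = √p`, after scaling by `√N` the two claims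
reduce to the numerical inequalities `0.68 + π / 11 < 0.968 < √15 / 4` and
`π / 8 + π / 11 < 0.68`, which follow from `3.1415 < π < 3.1416`.
-/

lemma self_le_arcsin {x : ℝ} (h0 : 0 ≤ x) (h1 : x ≤ 1) : x ≤ arcsin x := by
  have h := sin_le (arcsin_nonneg.2 h0)
  rwa [sin_arcsin (by linarith) h1] at h

/-- Jordan's inequality `2 / π * y ≤ sin y`, read at `y = arcsin x`. -/
lemma arcsin_le_pi_div_two_mul {x : ℝ} (h0 : 0 ≤ x) (h1 : x ≤ 1) : arcsin x ≤ π / 2 * x := by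
  have h := mul_le_sin (arcsin_nonneg.2 h0) (arcsin_le_pi_div_two x)
  rw [sin_arcsin (by linarith) h1] at h
  calc arcsin x = π / 2 * (2 / π * arcsin x) := by field_simp
    _ ≤ π / 2 * x := by gcongr

/-- Threshold analysis for `Chk_Amp_Dn`: for `N ≥ 1`, `0 ≤ p ≤ 1` and
`θ_p = arcsin(√p)`: (i) if `p ≥ 15/(16N)` then `θ_p − π/(11√N) > 0.68/√N`;
(ii) if `p ≤ 1/(16N)` then `θ_p + π/(11√N) < 0.68/√N`. -/
theorem chk_amp_dn_threshold (N : ℕ) (hN : 1 ≤ N) (p : ℝ)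
    (hp0 : 0 ≤ p) (hp1 : p ≤ 1) (θp : ℝ) (hθp : θp = Real.arcsin (Real.sqrt p)) :
    (15 / (16 * (N : ℝ)) ≤ p →
      0.68 / Real.sqrt N < θp - π / (11 * Real.sqrt N)) ∧
    (p ≤ 1 / (16 * (N : ℝ)) →
      θp + π / (11 * Real.sqrt N) < 0.68 / Real.sqrt N) := by
  have hNpos : (0 : ℝ) < N := by exact_mod_cast hN
  have hs : 0 < √(N : ℝ) := sqrt_pos.2 hNpos
  have hx0 : 0 ≤ √p := sqrt_nonneg p
  have hx1 : √p ≤ 1 := sqrt_le_one.2 hp1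
  have hmul : √p * √(N : ℝ) = √(p * N) := (sqrt_mul hp0 _).symm
  have hπ := pi_lt_d4
  have hπ' : π / (11 * √(N : ℝ)) = π / 11 / √(N : ℝ) := by rw [div_div]
  subst hθp
  rw [hπ']
  constructor
  · intro h
    have hpN : 15 / 16 ≤ p * N := by
      rw [div_le_iff₀ (by positivity)] at h
      linarith
    have hx : 0.968 ≤ √p * √(N : ℝ) := by
      rw [hmul]
      exact le_sqrt_of_sq_le (by norm_num at hpN ⊢; linarith)
    rw [lt_sub_iff_add_lt, ← add_div]
    refine lt_of_lt_of_le ?_ (self_le_arcsin hx0 hx1)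
    rw [div_lt_iff₀ hs]
    norm_num at hx ⊢
    linarith
  · intro h
    have hpN : p * N ≤ 1 / 16 := by
      rw [le_div_iff₀ (by positivity)] at h
      linarith
    have hx : √p * √(N : ℝ) ≤ 1 / 4 := by
      rw [hmul]
      exact sqrt_le_iff.2 ⟨by norm_num, by norm_num at hpN ⊢; linarith⟩
    rw [← lt_sub_iff_add_lt, ← sub_div]
    refine lt_of_le_of_lt (arcsin_le_pi_div_two_mul hx0 hx1) ?_
    rw [lt_div_iff₀ hs, mul_assoc]
    have h8 : π / 2 * (√p * √(N : ℝ)) ≤ π / 2 * (1 / 4) := by gcongr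
    norm_num at h8 ⊢
    linarith
end

section
/- For every integer L ≥ 0, the finite product ∏_{n=1}^{L} (1 − 1/(5n²)) is strictly greater than 2/3. -/
/-!
Induction needs a lower bound that exceeds `2/3` and shrinks at least as fast as the product. With
`g L = (5L+3)/(5L+2) > 1`, the bound `(2/3) * g L` equals `1`, the empty product, at `L = 0`, and
for `n = L + 1` one has `1 - g n / g L = 5 / (25n² - 4) ≥ 1 / (5n²)`, so each new factor
of the product is at least `g n / g L`.
-/

/-- The strengthened lower bound `(2/3) * g L` that carries the induction. -/
lemma two_thirds_mul_le_prod (L : ℕ) :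
    (2 / 3 : ℝ) * ((5 * L + 3) / (5 * L + 2)) ≤
      ∏ n ∈ Finset.Icc 1 L, (1 - 1 / (5 * (n : ℝ) ^ 2)) := by
  induction L with
  | zero => norm_num
  | succ L ih =>
    rw [Finset.prod_Icc_succ_top (by lia)]
    push_cast
    have hL : (0 : ℝ) ≤ L := Nat.cast_nonneg L
    have hfac : (0 : ℝ) ≤ 1 - 1 / (5 * ((L : ℝ) + 1) ^ 2) := by
      rw [sub_nonneg, div_le_one (by positivity)]
      nlinarith
    refine le_trans ?_ (mul_le_mul_of_nonneg_right ih hfac)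
    rw [← sub_nonneg]
    have key : (2 / 3 : ℝ) * ((5 * L + 3) / (5 * L + 2)) * (1 - 1 / (5 * ((L : ℝ) + 1) ^ 2))
        - 2 / 3 * ((5 * (L + 1) + 3) / (5 * (L + 1) + 2))
        = 8 / (15 * (5 * L + 2) * (5 * (L + 1) + 2) * ((L : ℝ) + 1) ^ 2) := by
      field_simp
      ring
    rw [key]
    positivity

/-- For every `L ≥ 0`, the finite product `∏_{n=1}^{L} (1 − 1/(5n²))` exceeds `2/3`. -/
theorem finite_product_gt_two_thirds (L : ℕ) :
    (2 / 3 : ℝ) < ∏ n ∈ Finset.Icc 1 L, (1 - 1 / (5 * (n : ℝ) ^ 2)) := by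
  refine lt_of_lt_of_le ?_ (two_thirds_mul_le_prod L)
  have h : (1 : ℝ) < (5 * L + 3) / (5 * L + 2) := by
    rw [one_lt_div (by positivity)]
    linarith
  linarith
end

section
/- Let θ be a real number with 0 < θ ≤ π/2, and let M be a real number with 1/(5θ) ≤ M ≤ 2π/θ. Then sin(θ)/(10π²) ≤ (1/2)·sin(1/(5M)) ≤ sin(θ)/2. -/
/-!
Put `x = 1/(5M)`. The two bounds on `M` say exactly that `θ/(10π) ≤ x ≤ θ`, so `x ∈ (0, π/2]`.
The upper bound is monotonicity of `sin` on `[-π/2, π/2]`. For the lower bound, Jordan's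
inequality `Real.mul_le_sin` gives `sin x ≥ 2x/π ≥ θ/(5π²)`, and `θ ≥ sin θ`.
-/

open Real

/-- If `0 < θ ≤ π/2` and `1/(5θ) ≤ M ≤ 2π/θ`, then
`sin(θ)/(10π²) ≤ (1/2)·sin(1/(5M)) ≤ sin(θ)/2`. -/
theorem est_eps_min_sandwich (θ : ℝ) (h0 : 0 < θ) (h1 : θ ≤ π / 2)
    (M : ℝ) (hM1 : 1 / (5 * θ) ≤ M) (hM2 : M ≤ 2 * π / θ) :
    Real.sin θ / (10 * π ^ 2) ≤ (1 / 2) * Real.sin (1 / (5 * M)) ∧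
    (1 / 2) * Real.sin (1 / (5 * M)) ≤ Real.sin θ / 2 := by
  have hπ := Real.pi_pos
  have hM : 0 < M := lt_of_lt_of_le (by positivity) hM1
  -- The bounds on `M` say that `x = 1/(5M)` lies in `[θ/(10π), θ] ⊆ [0, π/2]`.
  have hx0 : 0 < 1 / (5 * M) := by positivity
  have hxθ : 1 / (5 * M) ≤ θ := by
    rw [div_le_iff₀ (by positivity)] at hM1 ⊢
    linarith
  have hθx : θ / (10 * π) ≤ 1 / (5 * M) := by
    rw [le_div_iff₀ h0] at hM2
    rw [div_le_div_iff₀ (by positivity) (by positivity)]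
    linarith
  constructor
  -- Jordan's inequality `2x/π ≤ sin x`, combined with `sin θ ≤ θ`.
  · have hJ := Real.mul_le_sin hx0.le (hxθ.trans h1)
    calc Real.sin θ / (10 * π ^ 2) ≤ θ / (10 * π ^ 2) := by
          gcongr
          exact Real.sin_le h0.le
      _ = 1 / 2 * (2 / π * (θ / (10 * π))) := by
          field_simp
      _ ≤ 1 / 2 * (2 / π * (1 / (5 * M))) := by gcongr
      _ ≤ 1 / 2 * Real.sin (1 / (5 * M)) := by gcongr
  · have := Real.sin_le_sin_of_le_of_le_pi_div_two (by linarith) h1 hxθ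
    linarith
end
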